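/- Let n ≥ 1 and let A, B, F be real n×n matrices with A and B invertible. Then dist(F, SO(n)) ≤ (1 + |A⁻¹ − Id|)(1 + |B⁻¹ − Id|)·dist(A F B, SO(n)) + |A⁻¹ − Id| + |B⁻¹ − Id| + |A⁻¹ − Id|·|B⁻¹ − Id|. -/

import Mathlib

open Matrix

/-- The Frobenius norm of a real square matrix, `|F|² = tr(Fᵀ F)`. -/
noncomputable def frob {n : ℕ} (F : Matrix (Fin n) (Fin n) ℝ) : ℝ :=
  Real.sqrt ((Fᵀ * F).trace)

/-- The special orthogonal group `SO(n)` as a set of matrices. -/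
def SOn (n : ℕ) : Set (Matrix (Fin n) (Fin n) ℝ) :=
  {Q | Qᵀ * Q = 1 ∧ Q.det = 1}

/-- The Frobenius distance of a matrix to `SO(n)`. -/
noncomputable def distSO {n : ℕ} (F : Matrix (Fin n) (Fin n) ℝ) : ℝ :=
  sInf ((fun Q => frob (F - Q)) '' SOn n)

/-!
For `Q ∈ SO(n)`, the deviation splits as `F - Q = A⁻¹(AFB - Q)B⁻¹ + (A⁻¹QB⁻¹ - Q)`. Writing
`A⁻¹ = 1 + a` and `B⁻¹ = 1 + b`, the first term costs a factor `(1 + |a|)(1 + |b|)`. In the second,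
`aQ + Qb + aQb`, the Frobenius norm does not see the orthogonal factor `Q`. Taking the infimum over
`Q` concludes.

Expanding `A⁻¹` and `B⁻¹` rather than bounding `|A⁻¹| ≤ |1| + |a|` matters because `|1| = √n`.
-/

section MetricSpace

variable {X : Type*} [PseudoMetricSpace X]

theorem infDist_le_mul_infDist_add {S : Set X} (hS : S.Nonempty) {x y : X} {K c : ℝ}
    (hK : 0 ≤ K) (h : ∀ q ∈ S, dist x q ≤ K * dist y q + c) :
    Metric.infDist x S ≤ K * Metric.infDist y S + c := by
  have : Nonempty S := hS.to_subtype
  rw [← sub_le_iff_le_add, Metric.infDist_eq_iInf (x := y), Real.mul_iInf_of_nonneg hK]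
  refine le_ciInf fun q => ?_
  rw [sub_le_iff_le_add]
  exact (Metric.infDist_le_dist_of_mem q.2).trans (h q q.2)

end MetricSpace

section SeminormedRing

variable {R : Type*} [SeminormedRing R]

theorem norm_mul_le_one_add_norm_sub_one_mul (a x : R) : ‖a * x‖ ≤ (1 + ‖a - 1‖) * ‖x‖ :=
  calc ‖a * x‖ = ‖x + (a - 1) * x‖ := by noncomm_ring
    _ ≤ ‖x‖ + ‖a - 1‖ * ‖x‖ := norm_add_le_of_le le_rfl (norm_mul_le _ _)
    _ = (1 + ‖a - 1‖) * ‖x‖ := by ring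

theorem norm_mul_le_mul_one_add_norm_sub_one (x b : R) : ‖x * b‖ ≤ ‖x‖ * (1 + ‖b - 1‖) :=
  calc ‖x * b‖ = ‖x + x * (b - 1)‖ := by noncomm_ring
    _ ≤ ‖x‖ + ‖x‖ * ‖b - 1‖ := norm_add_le_of_le le_rfl (norm_mul_le _ _)
    _ = ‖x‖ * (1 + ‖b - 1‖) := by ring

theorem norm_mul_mul_sub_self_le (a b : R) {q : R} (hq_left : ∀ x, ‖q * x‖ ≤ ‖x‖)
    (hq_right : ∀ x, ‖x * q‖ ≤ ‖x‖) :
    ‖a * q * b - q‖ ≤ ‖a - 1‖ + ‖b - 1‖ + ‖a - 1‖ * ‖b - 1‖ :=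
  calc ‖a * q * b - q‖ = ‖(a - 1) * q + q * (b - 1) + (a - 1) * q * (b - 1)‖ := by noncomm_ring
    _ ≤ ‖(a - 1) * q‖ + ‖q * (b - 1)‖ + ‖(a - 1) * q‖ * ‖b - 1‖ :=
      norm_add_le_of_le (norm_add_le _ _) (norm_mul_le _ _)
    _ ≤ ‖a - 1‖ + ‖b - 1‖ + ‖a - 1‖ * ‖b - 1‖ := by
      gcongr
      exacts [hq_right _, hq_left _, hq_right _]

theorem norm_sub_le_mul_norm_mul_mul_sub_add {a a' b b' : R} (ha : a' * a = 1) (hb : b * b' = 1)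
    (x : R) {q : R} (hq_left : ∀ y, ‖q * y‖ ≤ ‖y‖) (hq_right : ∀ y, ‖y * q‖ ≤ ‖y‖) :
    ‖x - q‖ ≤ (1 + ‖a' - 1‖) * (1 + ‖b' - 1‖) * ‖a * x * b - q‖
      + (‖a' - 1‖ + ‖b' - 1‖ + ‖a' - 1‖ * ‖b' - 1‖) := by
  have hx : a' * (a * x * b) * b' = x :=
    calc a' * (a * x * b) * b' = a' * a * x * (b * b') := by noncomm_ring
      _ = x := by rw [ha, hb, one_mul, mul_one]
  have hsplit : x - q = a' * (a * x * b - q) * b' + (a' * q * b' - q) := by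
    rw [mul_sub, sub_mul, hx, sub_add_sub_cancel]
  have hmain : ‖a' * (a * x * b - q) * b'‖
      ≤ (1 + ‖a' - 1‖) * (1 + ‖b' - 1‖) * ‖a * x * b - q‖ :=
    calc ‖a' * (a * x * b - q) * b'‖
        ≤ ‖a' * (a * x * b - q)‖ * (1 + ‖b' - 1‖) := norm_mul_le_mul_one_add_norm_sub_one _ _
      _ ≤ (1 + ‖a' - 1‖) * ‖a * x * b - q‖ * (1 + ‖b' - 1‖) := by
        gcongr
        exact norm_mul_le_one_add_norm_sub_one_mul _ _
      _ = (1 + ‖a' - 1‖) * (1 + ‖b' - 1‖) * ‖a * x * b - q‖ := by ring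
  rw [hsplit]
  exact norm_add_le_of_le hmain (norm_mul_mul_sub_self_le a' b' hq_left hq_right)

end SeminormedRing

section Frobenius

open scoped Matrix.Norms.Frobenius

variable {𝕜 l m n : Type*} [RCLike 𝕜] [Fintype l] [Fintype m] [Fintype n]

theorem frobenius_norm_sq_eq_re_trace (A : Matrix m n 𝕜) :
    ‖A‖ ^ 2 = RCLike.re (Aᴴ * A).trace := by
  have hnonneg : 0 ≤ ∑ i, ∑ j, ‖A i j‖ ^ 2 := by positivity
  simp only [frobenius_norm_def, Real.rpow_two, ← Real.sqrt_eq_rpow, Real.sq_sqrt hnonneg, trace,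
    diag_apply, mul_apply, conjTranspose_apply, RCLike.star_def, RCLike.conj_mul, map_sum]
  rw [Finset.sum_comm]
  norm_cast

theorem frobenius_norm_mul_of_conjTranspose_mul_self [DecidableEq m] {U : Matrix l m 𝕜}
    (hU : Uᴴ * U = 1) (A : Matrix m n 𝕜) : ‖U * A‖ = ‖A‖ := by
  have htrace : (U * A)ᴴ * (U * A) = Aᴴ * A := by
    rw [conjTranspose_mul, Matrix.mul_assoc, ← Matrix.mul_assoc Uᴴ, hU, Matrix.one_mul]
  rw [← sq_eq_sq₀ (norm_nonneg _) (norm_nonneg _), frobenius_norm_sq_eq_re_trace, htrace,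
    frobenius_norm_sq_eq_re_trace]

theorem frobenius_norm_mul_of_mul_conjTranspose_self [DecidableEq m] {U : Matrix m n 𝕜}
    (hU : U * Uᴴ = 1) (A : Matrix l m 𝕜) : ‖A * U‖ = ‖A‖ := by
  rw [← frobenius_norm_conjTranspose, conjTranspose_mul,
    frobenius_norm_mul_of_conjTranspose_mul_self (by rwa [conjTranspose_conjTranspose]),
    frobenius_norm_conjTranspose]

theorem dist_SOn_perturbed_general [DecidableEq n] {S : Set (Matrix n n 𝕜)} (hS : S.Nonempty)
    (hS_unitary : S ⊆ unitaryGroup n 𝕜) (A B F : Matrix n n 𝕜) (hA : IsUnit A) (hB : IsUnit B) :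
    Metric.infDist F S ≤
      (1 + ‖A⁻¹ - 1‖) * (1 + ‖B⁻¹ - 1‖) * Metric.infDist (A * F * B) S
        + (‖A⁻¹ - 1‖ + ‖B⁻¹ - 1‖ + ‖A⁻¹ - 1‖ * ‖B⁻¹ - 1‖) := by
  have hA' : A⁻¹ * A = 1 := A.nonsing_inv_mul (A.isUnit_iff_isUnit_det.mp hA)
  have hB' : B * B⁻¹ = 1 := B.mul_nonsing_inv (B.isUnit_iff_isUnit_det.mp hB)
  refine infDist_le_mul_infDist_add hS (by positivity) fun Q hQ => ?_
  rw [dist_eq_norm, dist_eq_norm]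
  have hQ_unitary := hS_unitary hQ
  exact norm_sub_le_mul_norm_mul_mul_sub_add hA' hB' F
    (fun X => (frobenius_norm_mul_of_conjTranspose_mul_self
      (mem_unitaryGroup_iff'.mp hQ_unitary) X).le)
    (fun X => (frobenius_norm_mul_of_mul_conjTranspose_self
      (mem_unitaryGroup_iff.mp hQ_unitary) X).le)

end Frobenius

section SOn

open scoped Matrix.Norms.Frobenius

variable {n : ℕ}

theorem one_mem_SOn : (1 : Matrix (Fin n) (Fin n) ℝ) ∈ SOn n := by
  simp [SOn]

theorem SOn_subset_unitaryGroup : SOn n ⊆ unitaryGroup (Fin n) ℝ :=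
  fun _ hQ => mem_unitaryGroup_iff'.mpr hQ.1

theorem frob_eq_norm (F : Matrix (Fin n) (Fin n) ℝ) : frob F = ‖F‖ := by
  have htrace : (Fᵀ * F).trace = ‖F‖ ^ 2 := by
    rw [frobenius_norm_sq_eq_re_trace, conjTranspose_eq_transpose_of_trivial, RCLike.re_to_real]
  rw [frob, htrace, Real.sqrt_sq (norm_nonneg F)]

theorem distSO_eq_infDist (F : Matrix (Fin n) (Fin n) ℝ) : distSO F = Metric.infDist F (SOn n) := by
  simp only [distSO, Metric.infDist_eq_iInf, sInf_image', frob_eq_norm, dist_eq_norm]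

end SOn

theorem dist_SOn_perturbed {n : ℕ} (hn : 1 ≤ n) (A B F : Matrix (Fin n) (Fin n) ℝ)
    (hA : IsUnit A) (hB : IsUnit B) :
    distSO F ≤
      (1 + frob (A⁻¹ - 1)) * (1 + frob (B⁻¹ - 1)) * distSO (A * F * B)
        + frob (A⁻¹ - 1) + frob (B⁻¹ - 1) + frob (A⁻¹ - 1) * frob (B⁻¹ - 1) := by
  simpa only [frob_eq_norm, distSO_eq_infDist, add_assoc] using
    dist_SOn_perturbed_general ⟨1, one_mem_SOn⟩ SOn_subset_unitaryGroup A B F hA hB
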